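/- Let w be a permutation of {1,…,n} and δ ∈ GPDs(w). For all i < j, the pipes labelled i and j cross at an odd number of tiles of δ if w(i) > w(j), and at an even number of tiles if w(i) < w(j). Consequently the number of cross tiles of δ is at least ℓ(w) (the number of inversions of w), with equality if and only if no two pipes of δ cross at more than one tile. -/

import Mathlib

open scoped Classical

namespace GPDpaper

/-- Raw data of a pipe-filling of the `n × n` grid: `d.1 i j` is the (optional) pipe label on
the vertical edge at row `i`, West of column `j` (so `d.1 i 0` is on the West boundary and
`d.1 i (Fin.last n)` on the East boundary); `d.2 i j` is the label on the horizontal edge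
North of row `i` in column `j` (so `d.2 0 j` is on the North boundary and
`d.2 (Fin.last n) j` on the South boundary).  Rows are numbered from the top. -/
abbrev Pipes (n : ℕ) :=
  (Fin n → Fin (n+1) → Option (Fin n)) × (Fin (n+1) → Fin n → Option (Fin n))

variable {n : ℕ}

/-- Label on the West edge of square `(i,j)`. -/
def We (d : Pipes n) (i j : Fin n) : Option (Fin n) := d.1 i j.castSucc
/-- Label on the East edge of square `(i,j)`. -/
def Ea (d : Pipes n) (i j : Fin n) : Option (Fin n) := d.1 i j.succ
/-- Label on the North edge of square `(i,j)`. -/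
def No (d : Pipes n) (i j : Fin n) : Option (Fin n) := d.2 i.castSucc j
/-- Label on the South edge of square `(i,j)`. -/
def So (d : Pipes n) (i j : Fin n) : Option (Fin n) := d.2 i.succ j

/-- The local condition making `d` a generic pipe dream: at each square, the pair of labels
leaving through the East and North edges is either `(W,S)` (cross/horizontal/vertical/blank
tile) or `(S,W)` (bump/elbow/blank tile); moreover two edges of the same square never carry
the same pipe label. -/
def IsValid (d : Pipes n) : Prop :=
  ∀ i j : Fin n,
    ((Ea d i j, No d i j) = (We d i j, So d i j) ∨
     (Ea d i j, No d i j) = (So d i j, We d i j)) ∧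
    (We d i j = So d i j → We d i j = none)

/-- The seven generic pipe dream tiles. -/
inductive Tile where
  | cross | bump | nw | se | horiz | vert | blank
deriving DecidableEq

/-- The tile of a pipe-filling at square `(i,j)`. -/
def tile (d : Pipes n) (i j : Fin n) : Tile :=
  match We d i j, So d i j with
  | some a, some _ => if Ea d i j = some a then .cross else .bump
  | some _, none => if No d i j = none then .horiz else .nw
  | none, some _ => if No d i j = none then .se else .vert
  | none, none => .blank

/-- `d` is a generic pipe dream for the permutation `w`: it is locally valid, the pipe
entering the West boundary in row `i` is labelled `i`, no pipes meet the East and South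
boundaries, and the pipe exiting the North boundary in column `j` is labelled `w⁻¹(j)`. -/
def IsGPDof (w : Equiv.Perm (Fin n)) (d : Pipes n) : Prop :=
  IsValid d ∧
  (∀ i : Fin n, d.1 i 0 = some i) ∧
  (∀ i : Fin n, d.1 i (Fin.last n) = none) ∧
  (∀ j : Fin n, d.2 (Fin.last n) j = none) ∧
  (∀ j : Fin n, d.2 0 j = some (w.symm j))

/-- Number of tiles of `d` of a given type. -/
noncomputable def tileCount (d : Pipes n) (t : Tile) : ℕ :=
  (Finset.univ.filter (fun p : Fin n × Fin n => tile d p.1 p.2 = t)).card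

/-- The pipes labelled `p` and `q` cross at the tile `(i,j)`. -/
def CrossesAt (d : Pipes n) (p q : Fin n) (i j : Fin n) : Prop :=
  tile d i j = .cross ∧
  ((We d i j = some p ∧ So d i j = some q) ∨ (We d i j = some q ∧ So d i j = some p))

/-- The number of tiles at which the pipes labelled `p` and `q` cross. -/
noncomputable def crossCount (d : Pipes n) (p q : Fin n) : ℕ :=
  (Finset.univ.filter (fun ij : Fin n × Fin n => CrossesAt d p q ij.1 ij.2)).card

/-- No two pipes of `d` cross each other at more than one tile. -/
def NoDoubleCross (d : Pipes n) : Prop := ∀ p q : Fin n, crossCount d p q ≤ 1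

/-- Number of inversions (Coxeter length) of a permutation. -/
def invCount (w : Equiv.Perm (Fin n)) : ℕ :=
  (Finset.univ.filter (fun p : Fin n × Fin n => p.1 < p.2 ∧ w p.2 < w p.1)).card

/-- Classic pipe dream (in 1-indexed terms: crosses and bumps for `i+j ≤ n`, NW-elbows on the
antidiagonal `i+j = n+1`, blanks below, and no two pipes crossing twice). -/
def IsClassic (d : Pipes n) : Prop :=
  (∀ i j : Fin n, (i : ℕ) + (j : ℕ) + 2 ≤ n → tile d i j = .cross ∨ tile d i j = .bump) ∧
  (∀ i j : Fin n, (i : ℕ) + (j : ℕ) + 2 = n + 1 → tile d i j = .nw) ∧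
  (∀ i j : Fin n, (i : ℕ) + (j : ℕ) + 2 > n + 1 → tile d i j = .blank) ∧
  NoDoubleCross d

/-- Bumpless-reduced: no bump tiles and no two pipes crossing twice. -/
def IsBumplessReduced (d : Pipes n) : Prop :=
  (∀ i j : Fin n, tile d i j ≠ .bump) ∧ NoDoubleCross d


lemma row_lemma (vp vq sp sq tp tq : ℕ → ℤ) (m : ℕ)
    (hp : ∀ j < m, tp j + vp (j+1) = vp j + sp j)
    (hq : ∀ j < m, tq j + vq (j+1) = vq j + sq j) :
    (∑ j ∈ Finset.range m, tp j + vp m = vp 0 + ∑ j ∈ Finset.range m, sp j) ∧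
    ∑ j ∈ Finset.range m, (tp j * vq (j+1) - vp j * sq j) =
      (∑ k ∈ Finset.range m, (∑ l ∈ Finset.range k, tp l) * tq k)
      + (∑ l ∈ Finset.range m, tp l) * vq m
      - vp 0 * (∑ l ∈ Finset.range m, sq l)
      - ∑ k ∈ Finset.range m, (∑ l ∈ Finset.range k, sp l) * sq k := by
  induction m with
  | zero => simp
  | succ m ih =>
    obtain ⟨h1, h2⟩ := ih (fun j hj => hp j (by omega)) (fun j hj => hq j (by omega))
    have e1 := hp m (by omega)
    have e2 := hq m (by omega)
    simp only [Finset.sum_range_succ]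
    refine ⟨by linarith, ?_⟩
    rw [h2]
    set P := ∑ j ∈ Finset.range m, tp j
    set S := ∑ j ∈ Finset.range m, sp j
    have e3 : S = P + vp m - vp 0 := by linarith
    have e4 : tq m = vq m + sq m - vq (m+1) := by linarith
    rw [e3, e4]
    ring

lemma grid_lemma (n p q a b : ℕ) (hp : p < n) (hq : q < n) (ha : a < n) (hb : b < n)
    (Vp Vq Hp Hq : ℕ → ℕ → ℤ)
    (h1 : ∀ i < n, ∀ j < n, Hp i j + Vp i (j+1) = Vp i j + Hp (i+1) j)
    (h2 : ∀ i < n, ∀ j < n, Hq i j + Vq i (j+1) = Vq i j + Hq (i+1) j)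
    (wp : ∀ i < n, Vp i 0 = if i = p then 1 else 0)
    (wq : ∀ i < n, Vq i 0 = if i = q then 1 else 0)
    (eq : ∀ i < n, Vq i n = 0)
    (sq : ∀ j < n, Hq n j = 0)
    (np : ∀ j < n, Hp 0 j = if j = a then 1 else 0)
    (nq : ∀ j < n, Hq 0 j = if j = b then 1 else 0) :
    ∑ i ∈ Finset.range n, ∑ j ∈ Finset.range n,
      (Hp i j * Vq i (j+1) - Vp i j * Hq (i+1) j) =
      (if a < b then 1 else 0) - (if p < q then 1 else 0) := by
  have hQ : ∀ k i, i + k = n → ∑ j ∈ Finset.range n, Hq i j = if i ≤ q then 1 else 0 := by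
    intro k
    induction k with
    | zero =>
      intro i hi
      obtain rfl : i = n := by omega
      rw [if_neg (by omega)]
      exact Finset.sum_eq_zero fun j hj => sq j (Finset.mem_range.1 hj)
    | succ k ih =>
      intro i hi
      have hi' : i < n := by omega
      have r := (row_lemma (Vq i) (Vq i) (Hq (i+1)) (Hq (i+1)) (Hq i) (Hq i) n
        (h2 i hi') (h2 i hi')).1
      rw [ih (i+1) (by omega), eq i hi', wq i hi'] at r
      rw [add_zero] at r
      rw [r]
      split_ifs <;> first | omega | rfl
  have hrow : ∀ i ∈ Finset.range n, ∑ j ∈ Finset.range n,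
      (Hp i j * Vq i (j+1) - Vp i j * Hq (i+1) j) =
      ((∑ k ∈ Finset.range n, (∑ l ∈ Finset.range k, Hp i l) * Hq i k) -
       (∑ k ∈ Finset.range n, (∑ l ∈ Finset.range k, Hp (i+1) l) * Hq (i+1) k)) -
      (if i = p then (if p < q then 1 else 0) else 0) := by
    intro i hi
    have hi' := Finset.mem_range.1 hi
    rw [(row_lemma (Vp i) (Vq i) (Hp (i+1)) (Hq (i+1)) (Hp i) (Hq i) n
        (h1 i hi') (h2 i hi')).2, eq i hi', wp i hi', hQ (n - (i+1)) (i+1) (by omega)]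
    split_ifs <;> first | omega | (ring_nf; done) | grind
  rw [Finset.sum_congr rfl hrow, Finset.sum_sub_distrib,
    Finset.sum_range_sub' (fun i => ∑ k ∈ Finset.range n, (∑ l ∈ Finset.range k, Hp i l) * Hq i k)]
  rw [Finset.sum_ite_eq' (Finset.range n) p, if_pos (Finset.mem_range.2 hp)]
  have hz : ∑ k ∈ Finset.range n, (∑ l ∈ Finset.range k, Hp n l) * Hq n k = 0 :=
    Finset.sum_eq_zero fun j hj => by rw [sq j (Finset.mem_range.1 hj), mul_zero]
  have h0 : ∑ k ∈ Finset.range n, (∑ l ∈ Finset.range k, Hp 0 l) * Hq 0 k =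
      if a < b then 1 else 0 := by
    have : ∀ k ∈ Finset.range n, (∑ l ∈ Finset.range k, Hp 0 l) * Hq 0 k =
        if k = b then (if a < b then 1 else 0) else 0 := by
      intro k hk
      have hk' := Finset.mem_range.1 hk
      rw [nq k hk']
      split_ifs with hc hc'
      · subst hc
        rw [Finset.sum_congr rfl (fun l hl => np l (by have := Finset.mem_range.1 hl; omega))]
        rw [Finset.sum_ite_eq']
        simp [hc']
      · subst hc
        rw [Finset.sum_congr rfl (fun l hl => np l (by have := Finset.mem_range.1 hl; omega))]
        rw [Finset.sum_ite_eq']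
        simp [hc']
      · simp
    rw [Finset.sum_congr rfl this, Finset.sum_ite_eq', if_pos (Finset.mem_range.2 hb)]
  simp only [hz, h0, sub_zero]

/-- indicator of a label -/
noncomputable def ind {n : ℕ} (p : Fin n) (o : Option (Fin n)) : ℤ := if o = some p then 1 else 0

lemma tile_sum {n : ℕ} (w : Equiv.Perm (Fin n)) (d : Pipes n) (hd : IsGPDof w d) (p q : Fin n) :
    ∑ i : Fin n, ∑ j : Fin n,
      (ind p (No d i j) * ind q (Ea d i j) - ind p (We d i j) * ind q (So d i j)) =
      (if w p < w q then 1 else 0) - (if p < q then 1 else 0) := by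
  obtain ⟨hv, hW, hE, hS, hN⟩ := hd
  let V : Fin n → ℕ → ℕ → ℤ := fun p i j =>
    if h : i < n ∧ j < n + 1 then ind p (d.1 ⟨i, h.1⟩ ⟨j, h.2⟩) else 0
  let H : Fin n → ℕ → ℕ → ℤ := fun p i j =>
    if h : i < n + 1 ∧ j < n then ind p (d.2 ⟨i, h.1⟩ ⟨j, h.2⟩) else 0
  have cW : ∀ r (i j : Fin n), V r i j = ind r (We d i j) := by
    intro r i j
    have h : (i:ℕ) < n ∧ (j:ℕ) < n + 1 := by omega
    simp only [V, dif_pos h]; rfl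
  have cE : ∀ r (i j : Fin n), V r i (j+1) = ind r (Ea d i j) := by
    intro r i j
    have h : (i:ℕ) < n ∧ (j:ℕ) + 1 < n + 1 := by omega
    simp only [V, dif_pos h]; rfl
  have cN : ∀ r (i j : Fin n), H r i j = ind r (No d i j) := by
    intro r i j
    have h : (i:ℕ) < n + 1 ∧ (j:ℕ) < n := by omega
    simp only [H, dif_pos h]; rfl
  have cS : ∀ r (i j : Fin n), H r (i+1) j = ind r (So d i j) := by
    intro r i j
    have h : (i:ℕ) + 1 < n + 1 ∧ (j:ℕ) < n := by omega
    simp only [H, dif_pos h]; rfl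
  have loc : ∀ r, ∀ i < n, ∀ j < n, H r i j + V r i (j+1) = V r i j + H r (i+1) j := by
    intro r i hi j hj
    have h1 := cW r ⟨i, hi⟩ ⟨j, hj⟩
    have h2 := cE r ⟨i, hi⟩ ⟨j, hj⟩
    have h3 := cN r ⟨i, hi⟩ ⟨j, hj⟩
    have h4 := cS r ⟨i, hi⟩ ⟨j, hj⟩
    simp only at h1 h2 h3 h4
    rw [h1, h2, h3, h4]
    rcases (hv ⟨i, hi⟩ ⟨j, hj⟩).1 with h | h <;> rw [Prod.mk.injEq] at h <;> rw [h.1, h.2]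
    ring
  have bW : ∀ r : Fin n, ∀ i < n, V r i 0 = if i = (r:ℕ) then 1 else 0 := by
    intro r i hi
    have h : i < n ∧ 0 < n + 1 := by omega
    simp only [V, dif_pos h]
    have := hW ⟨i, hi⟩
    rw [show (⟨0, h.2⟩ : Fin (n+1)) = 0 from rfl, this]
    simp [ind, Fin.ext_iff]
  have bE : ∀ r : Fin n, ∀ i < n, V r i n = 0 := by
    intro r i hi
    have h : i < n ∧ n < n + 1 := by omega
    simp only [V, dif_pos h]
    have := hE ⟨i, hi⟩
    rw [show (⟨n, h.2⟩ : Fin (n+1)) = Fin.last n from rfl, this]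
    simp [ind]
  have bS : ∀ r : Fin n, ∀ j < n, H r n j = 0 := by
    intro r j hj
    have h : n < n + 1 ∧ j < n := by omega
    simp only [H, dif_pos h]
    have := hS ⟨j, hj⟩
    rw [show (⟨n, h.1⟩ : Fin (n+1)) = Fin.last n from rfl, this]
    simp [ind]
  have bN : ∀ r : Fin n, ∀ j < n, H r 0 j = if j = (w r : ℕ) then 1 else 0 := by
    intro r j hj
    have h : 0 < n + 1 ∧ j < n := by omega
    simp only [H, dif_pos h]
    have := hN ⟨j, hj⟩
    rw [show (⟨0, h.1⟩ : Fin (n+1)) = 0 from rfl, this]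
    simp [ind, Equiv.symm_apply_eq, Fin.ext_iff]
  have key := grid_lemma n p q (w p) (w q) p.2 q.2 (w p).2 (w q).2 (V p) (V q) (H p) (H q)
    (loc p) (loc q) (bW p) (bW q) (bE q) (bS q) (bN p) (bN q)
  rw [Finset.sum_range] at key
  simp only [Finset.sum_range, cW, cE, cN, cS] at key
  rw [key]
  simp only [Fin.lt_def]

lemma cross_iff {n : ℕ} (d : Pipes n) (hv : IsValid d) (i j : Fin n) :
    tile d i j = .cross ↔ ∃ a b, a ≠ b ∧ We d i j = some a ∧ So d i j = some b ∧
      Ea d i j = some a ∧ No d i j = some b := by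
  have h := hv i j
  unfold tile
  rcases hW : We d i j with _ | a <;> rcases hS : So d i j with _ | b <;>
    simp only [hW, hS, Prod.mk.injEq] at h ⊢
  · simp
  · split_ifs <;> simp
  · split_ifs <;> simp
  · grind

lemma local_parity {n : ℕ} (d : Pipes n) (hv : IsValid d) (p q : Fin n) (hpq : p ≠ q)
    (i j : Fin n) :
    (((ind p (No d i j) * ind q (Ea d i j) - ind p (We d i j) * ind q (So d i j) : ℤ)) : ZMod 2) =
      if CrossesAt d p q i j then 1 else 0 := by
  unfold CrossesAt
  by_cases hc : tile d i j = .cross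
  · obtain ⟨a, b, hab, h1, h2, h3, h4⟩ := (cross_iff d hv i j).1 hc
    simp only [hc, h1, h2, h3, h4, ind, Option.some.injEq, true_and]
    by_cases ha : a = p <;> by_cases hb : b = q <;> by_cases ha' : a = q <;>
      by_cases hb' : b = p <;> simp [*] <;> grind
  · have h := hv i j
    rw [if_neg (fun h => hc h.1)]
    rcases h.1 with h1 | h1 <;> rw [Prod.mk.injEq] at h1
    · rw [cross_iff d hv] at hc
      rcases hW : We d i j with _ | a <;> rcases hS : So d i j with _ | b <;>
        rw [hW, hS] at h1 <;> rw [h1.1, h1.2] <;> simp [ind]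
      exact absurd ⟨a, b, by grind, hW, hS, h1.1, h1.2⟩ hc
    · rw [h1.1, h1.2]; simp

lemma cross_parity {n : ℕ} (w : Equiv.Perm (Fin n)) (d : Pipes n) (hd : IsGPDof w d)
    (p q : Fin n) (hpq : p < q) :
    (crossCount d p q : ZMod 2) = if w q < w p then 1 else 0 := by
  have h := congrArg (fun z : ℤ => (z : ZMod 2)) (tile_sum w d hd p q)
  simp only [Int.cast_sum] at h
  simp only [local_parity d hd.1 p q hpq.ne] at h
  rw [if_pos hpq] at h
  unfold crossCount
  rw [Finset.card_filter, Fintype.sum_prod_type]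
  push_cast
  rw [h]
  have : w p ≠ w q := fun h => hpq.ne (w.injective h)
  by_cases h' : w p < w q
  · simp [h', h'.le]
  · have h2 : w q < w p := by omega
    simp [h', h2]

lemma tileCount_eq {n : ℕ} (d : Pipes n) (hv : IsValid d) :
    tileCount d .cross =
      ∑ pq ∈ Finset.univ.filter (fun pq : Fin n × Fin n => pq.1 < pq.2),
        crossCount d pq.1 pq.2 := by
  unfold tileCount crossCount
  rw [← Finset.card_biUnion]
  · congr 1
    ext ⟨i, j⟩
    simp only [Finset.mem_filter, Finset.mem_univ, true_and, Finset.mem_biUnion, Prod.exists]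
    constructor
    · intro hc
      obtain ⟨a, b, hab, h1, h2, h3, h4⟩ := (cross_iff d hv i j).1 hc
      rcases lt_or_gt_of_ne hab with h | h
      · exact ⟨a, b, h, hc, Or.inl ⟨h1, h2⟩⟩
      · exact ⟨b, a, h, hc, Or.inr ⟨h1, h2⟩⟩
    · rintro ⟨a, b, -, hc, -⟩
      exact hc
  · rintro ⟨a, b⟩ h1 ⟨a', b'⟩ h2 hne
    rw [Function.onFun, Finset.disjoint_left]
    rintro ⟨i, j⟩ h3 h4
    simp only [Finset.coe_filter, Set.mem_ofPred_eq, Finset.mem_filter, Finset.mem_univ, true_and]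
      at h1 h2 h3 h4
    apply hne
    have : a < b := h1
    have : a' < b' := h2
    rcases h3.2 with ⟨x, y⟩ | ⟨x, y⟩ <;> rcases h4.2 with ⟨z, t⟩ | ⟨z, t⟩ <;>
      rw [x] at z <;> rw [y] at t <;> simp only [Option.some.injEq] at z t <;>
      subst z <;> subst t <;> first | rfl | omega

lemma crossCount_comm {n : ℕ} (d : Pipes n) (p q : Fin n) :
    crossCount d p q = crossCount d q p := by
  unfold crossCount
  congr 1
  ext ij
  simp only [Finset.mem_filter]
  unfold CrossesAt
  tauto

lemma crossCount_self {n : ℕ} (d : Pipes n) (hv : IsValid d) (p : Fin n) :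
    crossCount d p p = 0 := by
  unfold crossCount
  rw [Finset.card_eq_zero, Finset.filter_eq_empty_iff]
  rintro ⟨i, j⟩ - ⟨-, h⟩
  have := (hv i j).2
  grind

theorem statement7 {n : ℕ} (hn : 1 ≤ n) (w : Equiv.Perm (Fin n)) (d : Pipes n)
    (hd : IsGPDof w d) :
    (∀ p q : Fin n, p < q →
      (w q < w p → Odd (crossCount d p q)) ∧ (w p < w q → Even (crossCount d p q))) ∧
    invCount w ≤ tileCount d .cross ∧
    (tileCount d .cross = invCount w ↔ NoDoubleCross d) := by
  have par : ∀ p q : Fin n, p < q →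
      (w q < w p → Odd (crossCount d p q)) ∧ (w p < w q → Even (crossCount d p q)) := by
    intro p q hpq
    have h := cross_parity w d hd p q hpq
    constructor
    · intro h'
      rw [if_pos h'] at h
      exact (ZMod.natCast_eq_one_iff_odd).1 h
    · intro h'
      rw [if_neg h'.not_gt] at h
      exact (ZMod.natCast_eq_zero_iff_even).1 h
  have inv : invCount w = ∑ pq ∈ Finset.univ.filter (fun pq : Fin n × Fin n => pq.1 < pq.2),
      (if w pq.2 < w pq.1 then 1 else 0) := by
    rw [← Finset.card_filter, Finset.filter_filter]
    unfold invCount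
    congr
  have le : ∀ pq ∈ Finset.univ.filter (fun pq : Fin n × Fin n => pq.1 < pq.2),
      (if w pq.2 < w pq.1 then 1 else 0) ≤ crossCount d pq.1 pq.2 := by
    intro pq h
    split_ifs with h'
    · exact ((par pq.1 pq.2 (Finset.mem_filter.1 h).2).1 h').pos
    · exact Nat.zero_le _
  refine ⟨par, ?_, ?_⟩
  · rw [inv, tileCount_eq d hd.1]
    exact Finset.sum_le_sum le
  · rw [inv, tileCount_eq d hd.1, eq_comm, Finset.sum_eq_sum_iff_of_le le]
    constructor
    · intro h
      have h1 : ∀ p q : Fin n, p < q → crossCount d p q ≤ 1 := by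
        intro p q hpq
        rw [← h (p, q) (by simpa using hpq)]
        split_ifs <;> omega
      intro p q
      rcases lt_trichotomy p q with h' | h' | h'
      · exact h1 p q h'
      · rw [h', crossCount_self d hd.1]; omega
      · rw [crossCount_comm]; exact h1 q p h'
    · rintro h ⟨p, q⟩ hpq
      have hpq : p < q := (Finset.mem_filter.1 hpq).2
      have hle := h p q
      have hne : w p ≠ w q := fun h => hpq.ne (w.injective h)
      simp only
      split_ifs with h'
      · have := ((par p q hpq).1 h').pos
        omega
      · obtain ⟨k, hk⟩ := (par p q hpq).2 (lt_of_le_of_ne (not_lt.1 h') hne)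
        omega

end GPDpaper
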